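/- arXiv:2503.12788 — 2 statements merged into one kernel-verified Lean document; each statement's English description precedes it below -/
import Mathlib

section
/- Let α be a type with decidable equality, let L be a multiset over α with card m, and let Vc be a finite set (Finset) of elements of α with card c ≥ 1. Suppose that the number of elements of L, counted with multiplicity, that do not belong to Vc is at most f, and that f·(c+1) < m. Then there exists v ∈ Vc such that for every w ∉ Vc, the multiplicity of w in L is strictly less than the multiplicity of v in L. -/
theorem strong_validity_core {α : Type*} [DecidableEq α]
    (L : Multiset α) (Vc : Finset α) (m c f : ℕ)
    (hm : Multiset.card L = m) (hc : Vc.card = c) (hc1 : 1 ≤ c)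
    (hf : (L.filter (· ∉ Vc)).card ≤ f)
    (hres : f * (c + 1) < m) :
    ∃ v ∈ Vc, ∀ w ∉ Vc, Multiset.count w L < Multiset.count v L := by
  have h1 : (L.filter (· ∈ Vc)).card + (L.filter (· ∉ Vc)).card = m := by
    rw [← Multiset.card_add, Multiset.filter_add_not, hm]
  have h2 : ∑ a ∈ Vc, (L.filter (· ∈ Vc)).count a = (L.filter (· ∈ Vc)).card :=
    Multiset.sum_count_eq_card (fun a ha => (Multiset.mem_filter.1 ha).2)
  have h3 : ∃ v ∈ Vc, f < (L.filter (· ∈ Vc)).count v := by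
    by_contra! h
    have h4 := Finset.sum_le_card_nsmul Vc _ f h
    rw [h2, hc, smul_eq_mul] at h4
    nlinarith
  obtain ⟨v, hv, hlt⟩ := h3
  refine ⟨v, hv, fun w hw => ?_⟩
  rw [Multiset.count_filter_of_pos (p := (· ∈ Vc)) hv] at hlt
  have h5 := Multiset.count_le_card w (L.filter (· ∉ Vc))
  rw [Multiset.count_filter_of_pos (p := (· ∉ Vc)) hw] at h5
  omega
end

section
/- Let α be a type with decidable equality, let L be a multiset over α with card m, and let Vc be a finite set (Finset) of elements of α with card c ≥ 1. Suppose that the number of elements of L, counted with multiplicity, that do not belong to Vc is at most f, and that f·(c+1) < m. Then every element u of α whose multiplicity in L is greatest (i.e., Multiset.count u L ≥ Multiset.count x L for all x : α) belongs to Vc. In particular, the mode of L (a most-frequent element, with ties broken arbitrarily) lies in Vc. -/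
theorem mode_in_correct_values {α : Type*} [DecidableEq α]
    (L : Multiset α) (Vc : Finset α) (m c f : ℕ)
    (hm : Multiset.card L = m) (hc : Vc.card = c) (hc1 : 1 ≤ c)
    (hf : (L.filter (· ∉ Vc)).card ≤ f)
    (hres : f * (c + 1) < m) :
    ∀ u : α, (∀ x : α, Multiset.count x L ≤ Multiset.count u L) → u ∈ Vc := by
  intro u hu
  by_contra hn
  have h1 : Multiset.count u L ≤ f := by
    have h := Multiset.count_le_card u (L.filter (· ∉ Vc))
    rw [Multiset.count_filter_of_pos (p := (· ∉ Vc)) hn] at h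
    exact h.trans hf
  have h2 : (L.filter (· ∈ Vc)).card ≤ c * f := by
    rw [← Multiset.sum_count_eq_card (s := Vc) (m := L.filter (· ∈ Vc))
      (fun a ha => (Multiset.mem_filter.mp ha).2), ← hc, ← smul_eq_mul]
    refine Finset.sum_le_card_nsmul _ _ _ fun x _ => ?_
    exact (Multiset.count_le_of_le x (Multiset.filter_le _ L)).trans ((hu x).trans h1)
  have h3 := congrArg Multiset.card (Multiset.filter_add_not (· ∈ Vc) L)
  rw [Multiset.card_add] at h3
  nlinarith
end
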